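/- arXiv:math-ph/0412093 — 3 statements merged into one kernel-verified Lean document; each statement's English description precedes it below -/
import Mathlib

section
/- Let M = M_n(ℂ) with faithful state ω of density D_ω, and let M₀ ⊆ M be a *-subalgebra invariant under the modular group of ω. Let D₀ ∈ M₀ be the density of ω|M₀ with respect to the restricted trace (i.e., Tr(D₀ a) = Tr(D_ω a) for a ∈ M₀) and D₁ ∈ M₁ := M₀' ∩ M the analogous density for ω|M₁. Then there exists a positive element z in the center of M₁ such that D_ω = D₀ D₁ z, and D₀, D₁, z mutually commute. -/
open ComplexOrder Matrix

/-- Imaginary power `D^{it}` of a Hermitian matrix, via spectral decomposition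
(vanishing on the kernel). -/
noncomputable def Matrix.IsHermitian.impow {n : ℕ} {D : Matrix (Fin n) (Fin n) ℂ}
    (hD : D.IsHermitian) (t : ℝ) : Matrix (Fin n) (Fin n) ℂ :=
  (hD.eigenvectorUnitary : Matrix (Fin n) (Fin n) ℂ) *
    Matrix.diagonal (fun i => if hD.eigenvalues i = 0 then 0 else
      Complex.exp (Complex.I * t * Real.log (hD.eigenvalues i))) *
    star (hD.eigenvectorUnitary : Matrix (Fin n) (Fin n) ℂ)

/-!
Let `L = log D`. For `a ∈ M₀` the entire function `z ↦ exp (zL) a exp (-zL)` takes values in `M₀` on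
the imaginary axis by modular invariance, hence everywhere by the identity theorem modulo `M₀`; at
`z = 1` this says that `D a D⁻¹ ∈ M₀`. For `a, b ∈ M₀`, cyclicity of the trace then gives
`Tr (D₀ a b) = Tr (D a b) = Tr (D b D a D⁻¹) = Tr (D₀ b D a D⁻¹)`, so that `D₀ a = D a D⁻¹ D₀`,
which means that `D₀⁻¹ D` commutes with `M₀`. Taking adjoints, `M₁` is stable under conjugation by
`D` as well, so `D₁⁻¹ D` commutes with `M₁`. Therefore `z = D₁⁻¹ (D₀⁻¹ D) = D₀⁻¹ (D₁⁻¹ D)` commutes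
with both `M₀` and `M₁`, and it is positive as a product of commuting positive matrices.
-/

section ModularInvariance

open Complex (I)
open Filter NormedSpace Topology

theorem mem_of_differentiable_of_forall_ofReal_mem {E : Type*} [NormedAddCommGroup E]
    [NormedSpace ℂ E] [CompleteSpace E] {f : ℂ → E} (hf : Differentiable ℂ f)
    {p : Submodule ℂ E} [IsClosed (p : Set E)] (hreal : ∀ t : ℝ, f t ∈ p) (z : ℂ) : f z ∈ p := by
  have hquot : AnalyticOnNhd ℂ (fun w => p.mkQL (f w)) Set.univ := fun w _ =>
    (p.mkQL.differentiable.comp hf).analyticAt w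
  have hofReal : Tendsto ((↑) : ℝ → ℂ) (𝓝[≠] 0) (𝓝[≠] 0) :=
    Complex.ofReal_zero ▸ Complex.ofRealCLM.hasDerivAt.tendsto_nhdsNE (by simp)
  have hzero : (fun w => p.mkQL (f w)) = 0 :=
    hquot.eq_of_frequently_eq analyticOnNhd_const <|
      hofReal.frequently <| Frequently.of_forall fun t => by simpa using hreal t
  simpa using congrFun hzero z

theorem exp_smul_mul_mul_exp_neg_smul_mem {A : Type*} [NormedRing A] [NormedAlgebra ℂ A]
    [CompleteSpace A] {p : Submodule ℂ A} [IsClosed (p : Set A)] {L a : A}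
    (himag : ∀ t : ℝ, exp ((I * t) • L) * a * exp ((I * (-t : ℝ)) • L) ∈ p) (z : ℂ) :
    exp (z • L) * a * exp (-z • L) ∈ p := by
  have hexp : Differentiable ℂ fun w : ℂ => exp (w • L) := fun w =>
    (hasDerivAt_exp_smul_const L w).differentiableAt
  have hflow : Differentiable ℂ fun w : ℂ => exp ((I * w) • L) * a * exp ((I * -w) • L) :=
    ((hexp.fun_comp (differentiable_id.const_mul I)).mul_const a).mul
      (hexp.fun_comp (differentiable_neg.const_mul I))
  have hmem := mem_of_differentiable_of_forall_ofReal_mem hflow (by simpa using himag) (-I * z)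
  simpa [← mul_assoc] using hmem

open scoped MatrixOrder Matrix.Norms.L2Operator

variable {n : ℕ} {D : Matrix (Fin n) (Fin n) ℂ}

theorem impow_eq_exp_smul_log (hD : D.PosDef) (t : ℝ) :
    hD.isHermitian.impow t = exp ((I * t) • CFC.log D) := by
  let U := hD.isHermitian.eigenvectorUnitary
  let φ := Unitary.conjStarAlgAut ℂ (Matrix (Fin n) (Fin n) ℂ) U
  have hφ (X : Matrix (Fin n) (Fin n) ℂ) : exp (φ X) = φ (exp X) :=
    Matrix.exp_units_conj (Unitary.toUnits U) X
  rw [CFC.log, hD.isHermitian.cfc_eq, IsHermitian.cfc, ← map_smul φ, hφ,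
    ← diagonal_smul, Matrix.exp_diagonal]
  change φ _ = _
  congr 2
  ext i
  simp [(hD.eigenvalues_pos i).ne', Complex.exp_eq_exp_ℂ]

theorem mul_mul_inv_mem_of_forall_impow (hD : D.PosDef)
    {N : StarSubalgebra ℂ (Matrix (Fin n) (Fin n) ℂ)}
    (hinv : ∀ t : ℝ, ∀ a ∈ N, hD.isHermitian.impow t * a * hD.isHermitian.impow (-t) ∈ N)
    {a : Matrix (Fin n) (Fin n) ℂ} (ha : a ∈ N) : D * a * D⁻¹ ∈ N := by
  let p := Subalgebra.toSubmodule N.toSubalgebra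
  have hclosed : IsClosed (p : Set (Matrix (Fin n) (Fin n) ℂ)) := p.closed_of_finiteDimensional
  have hmem := exp_smul_mul_mul_exp_neg_smul_mem (p := p)
    (fun t => impow_eq_exp_smul_log hD t ▸ impow_eq_exp_smul_log hD (-t) ▸ hinv t a ha) 1
  rwa [neg_smul, one_smul, Matrix.exp_neg, CFC.exp_log D hD.isStrictlyPositive] at hmem

end ModularInvariance

section Centralizer

variable {R A : Type*} [CommSemiring R] [StarRing R] [Semiring A] [StarRing A] [Algebra R A]
  [StarModule R A] {N : StarSubalgebra R A} {a : A}

theorem mem_centralizer_iff_forall_commute :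
    a ∈ StarSubalgebra.centralizer R (N : Set A) ↔ ∀ b ∈ N, Commute a b := by
  rw [StarSubalgebra.mem_centralizer_iff]
  exact ⟨fun h b hb => (h b hb).1.symm, fun h b hb => ⟨(h b hb).symm, (h _ (star_mem hb)).symm⟩⟩

theorem conj_mem_centralizer {u : Aˣ} (hu : IsSelfAdjoint u)
    (hconj : ∀ a ∈ N, ↑u * a * ↑u⁻¹ ∈ N) (ha : a ∈ StarSubalgebra.centralizer R (N : Set A)) :
    ↑u * a * ↑u⁻¹ ∈ StarSubalgebra.centralizer R (N : Set A) := by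
  rw [mem_centralizer_iff_forall_commute] at ha ⊢
  intro b hb
  have hmem : ↑u⁻¹ * b * ↑u ∈ N := by
    simpa [← Units.coe_star, ← Units.coe_star_inv, hu.star_eq, mul_assoc] using
      star_mem (hconj _ (star_mem hb))
  calc ↑u * a * ↑u⁻¹ * b = ↑u * (a * (↑u⁻¹ * b * ↑u)) * ↑u⁻¹ := by simp [mul_assoc]
    _ = ↑u * (↑u⁻¹ * b * ↑u * a) * ↑u⁻¹ := by rw [(ha _ hmem).eq]
    _ = b * (↑u * a * ↑u⁻¹) := by simp [mul_assoc]

end Centralizer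

section Density

theorem commute_inv_left {m R : Type*} [Fintype m] [DecidableEq m] [CommRing R]
    {A B : Matrix m m R} (h : Commute A B) : Commute A⁻¹ B := by
  simpa using Matrix.Commute.zpow_left h (-1)

variable {m 𝕜 : Type*} [Fintype m] [RCLike 𝕜]

theorem eq_of_forall_trace_mul_eq {S : Type*} [SetLike S (Matrix m m 𝕜)]
    [AddSubgroupClass S (Matrix m m 𝕜)] [StarMemClass S (Matrix m m 𝕜)] {N : S}
    {x y : Matrix m m 𝕜} (hx : x ∈ N) (hy : y ∈ N)
    (h : ∀ a ∈ N, (x * a).trace = (y * a).trace) : x = y := by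
  have hstar := h _ (star_mem (sub_mem hx hy))
  rwa [← sub_eq_zero, ← trace_sub, ← sub_mul, star_eq_conjTranspose,
    trace_mul_conjTranspose_self_eq_zero_iff, sub_eq_zero] at hstar

section Positivity

open scoped MatrixOrder

theorem posSemidef_mul_of_commute {A B : Matrix m m 𝕜} (hA : A.PosSemidef) (hB : B.PosSemidef)
    (h : Commute A B) : (A * B).PosSemidef := by
  classical exact (Commute.mul_nonneg hA.nonneg hB.nonneg h).posSemidef

theorem trace_mul_mul_conjTranspose_pos {D b : Matrix m m 𝕜} (hD : D.PosDef) (hb : b ≠ 0) :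
    0 < (D * (b * bᴴ)).trace := by
  classical
  obtain ⟨y, hy, rfl⟩ :=
    CStarAlgebra.isStrictlyPositive_iff_eq_star_mul_self.mp hD.isStrictlyPositive
  have htrace : (star y * y * (b * bᴴ)).trace = ((y * b)ᴴ * (y * b)).trace := by
    rw [← Matrix.mul_assoc, trace_mul_comm, conjTranspose_mul, star_eq_conjTranspose]
    simp only [Matrix.mul_assoc]
  rw [htrace]
  refine (posSemidef_conjTranspose_mul_self _).trace_nonneg.lt_of_ne' ?_
  rwa [Ne, trace_conjTranspose_mul_self_eq_zero_iff, hy.mul_right_eq_zero]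

variable [DecidableEq m]

-- The test element is the spectral projection of `E` onto `(-∞, 0]`, which lies in `N`.
theorem posDef_of_forall_trace_mul_pos {N : StarSubalgebra 𝕜 (Matrix m m 𝕜)} {E : Matrix m m 𝕜}
    (hE : E.IsHermitian) (hmem : E ∈ N) (hpos : ∀ b ∈ N, b ≠ 0 → 0 < (E * (b * bᴴ)).trace) :
    E.PosDef := by
  let f : ℝ → ℝ := fun x => if x ≤ 0 then 1 else 0
  have hcont (g : ℝ → ℝ) : ContinuousOn g (spectrum ℝ E) :=
    (Matrix.finite_real_spectrum (A := E)).continuousOn g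
  have hproj : cfc f E * (cfc f E)ᴴ = cfc f E := by
    rw [← star_eq_conjTranspose, (cfc_predicate f E).star_eq, ← cfc_mul f f E (hcont f) (hcont f)]
    congr 1
    ext x
    simp [f]
  have hf_mem : cfc f E ∈ N := by
    have : IsClosed (N : Set (Matrix m m 𝕜)) :=
      (Subalgebra.toSubmodule N.toSubalgebra).closed_of_finiteDimensional
    exact cfc_mem (𝕜' := 𝕜) f hmem
  have hnonpos : E * cfc f E ≤ 0 := by
    nth_rw 1 [← cfc_id' ℝ E]
    rw [← cfc_mul _ f E (hcont _) (hcont f)]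
    refine cfc_nonpos _ E fun x _ => ?_
    by_cases hx : x ≤ 0 <;> simp [f, hx]
  have htrace : (E * (cfc f E * (cfc f E)ᴴ)).trace ≤ 0 := by
    simpa [hproj] using (le_iff.mp hnonpos).trace_nonneg
  have hzero : cfc f E = cfc (0 : ℝ → ℝ) E := by
    by_contra hne
    exact (hpos _ hf_mem (by simpa using hne)).not_ge htrace
  rw [hE.posDef_iff_eigenvalues_pos]
  intro i
  have hfi := (cfc_eq_cfc_iff_eqOn (hf := hcont f) (hg := hcont 0)).1 hzero
    (hE.eigenvalues_mem_spectrum_real i)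
  simpa [f] using hfi

end Positivity

variable [DecidableEq m]

/-- `E` is the density, with respect to the restricted trace on `N`, of the restriction to `N` of
the functional `a ↦ Tr (D a)`. Positivity of `E` is a consequence of that of `D` (see
`IsReducedDensity.posDef`) and not part of the definition. -/
structure IsReducedDensity (D : Matrix m m 𝕜) (N : StarSubalgebra 𝕜 (Matrix m m 𝕜))
    (E : Matrix m m 𝕜) : Prop where
  mem : E ∈ N
  trace_mul_eq : ∀ a ∈ N, (E * a).trace = (D * a).trace

namespace IsReducedDensity

variable {D E : Matrix m m 𝕜} {N : StarSubalgebra 𝕜 (Matrix m m 𝕜)}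

theorem isHermitian (hD : D.IsHermitian) (hE : IsReducedDensity D N E) : E.IsHermitian := by
  refine eq_of_forall_trace_mul_eq (star_mem hE.mem) hE.mem fun a ha => ?_
  have hstar (X : Matrix m m 𝕜) : (Xᴴ * a).trace = star (X * star a).trace := by
    rw [star_eq_conjTranspose, ← trace_conjTranspose, conjTranspose_mul,
      conjTranspose_conjTranspose, trace_mul_comm]
  calc (Eᴴ * a).trace = star (E * star a).trace := hstar E
    _ = star (D * star a).trace := by rw [hE.trace_mul_eq _ (star_mem ha)]
    _ = (Dᴴ * a).trace := (hstar D).symm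
    _ = (E * a).trace := by rw [hD.eq, hE.trace_mul_eq a ha]

theorem posDef (hD : D.PosDef) (hE : IsReducedDensity D N E) : E.PosDef :=
  posDef_of_forall_trace_mul_pos (hE.isHermitian hD.isHermitian) hE.mem fun b hb hne => by
    rw [← star_eq_conjTranspose, hE.trace_mul_eq _ (mul_mem hb (star_mem hb))]
    exact trace_mul_mul_conjTranspose_pos hD hne

theorem mul_eq_conj_mul (hD : IsUnit D) (hconj : ∀ a ∈ N, D * a * D⁻¹ ∈ N)
    (hE : IsReducedDensity D N E) {a : Matrix m m 𝕜} (ha : a ∈ N) : E * a = D * a * D⁻¹ * E := by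
  have hc := hconj a ha
  refine eq_of_forall_trace_mul_eq (mul_mem hE.mem ha) (mul_mem hc hE.mem) fun b hb => ?_
  calc (E * a * b).trace = (D * (a * b)).trace := by
        rw [Matrix.mul_assoc, hE.trace_mul_eq _ (mul_mem ha hb)]
    _ = (D * (b * (D * a * D⁻¹))).trace := by
        rw [trace_mul_comm D (b * _), Matrix.mul_assoc b,
          nonsing_inv_mul_cancel_right _ _ ((isUnit_iff_isUnit_det D).1 hD),
          trace_mul_comm b, Matrix.mul_assoc]
    _ = (E * (b * (D * a * D⁻¹))).trace := (hE.trace_mul_eq _ (mul_mem hb hc)).symm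
    _ = (D * a * D⁻¹ * E * b).trace := by
        rw [← Matrix.mul_assoc, trace_mul_comm, Matrix.mul_assoc (D * a * D⁻¹)]

theorem commute_inv_mul (hD : D.PosDef) (hconj : ∀ a ∈ N, D * a * D⁻¹ ∈ N)
    (hE : IsReducedDensity D N E) {a : Matrix m m 𝕜} (ha : a ∈ N) : Commute (E⁻¹ * D) a := by
  have hEdet := (isUnit_iff_isUnit_det E).1 (hE.posDef hD).isUnit
  have hDdet := (isUnit_iff_isUnit_det D).1 hD.isUnit
  calc E⁻¹ * D * a = E⁻¹ * (D * a * D⁻¹ * E) * E⁻¹ * D := by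
        rw [← Matrix.mul_assoc, mul_nonsing_inv_cancel_right _ _ hEdet, ← Matrix.mul_assoc,
          nonsing_inv_mul_cancel_right _ _ hDdet, Matrix.mul_assoc]
    _ = E⁻¹ * (E * a) * E⁻¹ * D := by rw [hE.mul_eq_conj_mul hD.isUnit hconj ha]
    _ = a * (E⁻¹ * D) := by rw [nonsing_inv_mul_cancel_left _ _ hEdet, Matrix.mul_assoc]

theorem commute_density (hD : D.PosDef) (hconj : ∀ a ∈ N, D * a * D⁻¹ ∈ N)
    (hE : IsReducedDensity D N E) : Commute E D := by
  have hEdet := (isUnit_iff_isUnit_det E).1 (hE.posDef hD).isUnit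
  simpa [mul_nonsing_inv_cancel_left _ _ hEdet] using
    (Commute.refl E).mul_right (hE.commute_inv_mul hD hconj hE.mem).symm

end IsReducedDensity

theorem density_factorization_general {D : Matrix m m 𝕜} (hD : D.PosDef)
    {M₀ : StarSubalgebra 𝕜 (Matrix m m 𝕜)} (hconj : ∀ a ∈ M₀, D * a * D⁻¹ ∈ M₀)
    {D₀ D₁ : Matrix m m 𝕜} (h₀ : IsReducedDensity D M₀ D₀)
    (h₁ : IsReducedDensity D (StarSubalgebra.centralizer 𝕜 (M₀ : Set (Matrix m m 𝕜))) D₁) :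
    ∃ z : Matrix m m 𝕜, z.PosSemidef ∧ (∀ b ∈ M₀, Commute z b) ∧
      (∀ a, (∀ b ∈ M₀, Commute a b) → Commute z a) ∧
      D = D₀ * D₁ * z ∧ Commute D₀ D₁ ∧ Commute D₀ z ∧ Commute D₁ z := by
  have hconj₁ (a) (ha : a ∈ StarSubalgebra.centralizer 𝕜 (M₀ : Set (Matrix m m 𝕜))) :
      D * a * D⁻¹ ∈ StarSubalgebra.centralizer 𝕜 (M₀ : Set (Matrix m m 𝕜)) := by
    simpa using conj_mem_centralizer (u := hD.isUnit.unit) (Units.ext hD.isHermitian)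
      (by simpa using hconj) ha
  have hD₁ : ∀ b ∈ M₀, Commute D₁ b := mem_centralizer_iff_forall_commute.1 h₁.mem
  have h₀₁ : Commute D₀ D₁ := (hD₁ D₀ h₀.mem).symm
  have hunit : IsUnit (D₀ * D₁) := (h₀.posDef hD).isUnit.mul (h₁.posDef hD).isUnit
  let z := (D₀ * D₁)⁻¹ * D
  have hz₀ (b) (hb : b ∈ M₀) : Commute z b := by
    rw [show z = D₁⁻¹ * (D₀⁻¹ * D) by simp only [z, Matrix.mul_inv_rev, Matrix.mul_assoc]]
    exact (commute_inv_left (hD₁ b hb)).mul_left (h₀.commute_inv_mul hD hconj hb)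
  have hz₁ (a) (ha : ∀ b ∈ M₀, Commute a b) : Commute z a := by
    rw [show z = D₀⁻¹ * (D₁⁻¹ * D) by simp only [z, h₀₁.eq, Matrix.mul_inv_rev, Matrix.mul_assoc]]
    exact (commute_inv_left (ha D₀ h₀.mem).symm).mul_left
      (h₁.commute_inv_mul hD hconj₁ (mem_centralizer_iff_forall_commute.2 ha))
  have hcomm : Commute (D₀ * D₁) D :=
    (h₀.commute_density hD hconj).mul_left (h₁.commute_density hD hconj₁)
  have hpsd : (D₀ * D₁).PosSemidef :=
    posSemidef_mul_of_commute (h₀.posDef hD).posSemidef (h₁.posDef hD).posSemidef h₀₁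
  exact ⟨z, posSemidef_mul_of_commute hpsd.inv hD.posSemidef (commute_inv_left hcomm), hz₀, hz₁,
    (mul_nonsing_inv_cancel_left _ _ ((isUnit_iff_isUnit_det _).1 hunit)).symm, h₀₁,
    (hz₀ D₀ h₀.mem).symm, (hz₁ D₁ hD₁).symm⟩

end Density

/-- **Factorization of the density of `ω` along a modular-invariant
subalgebra.**  If `M₀ ⊆ M_n(ℂ)` is invariant under the modular group of the
faithful state `ω`, and `D₀ ∈ M₀`, `D₁ ∈ M₁ = M₀' ∩ M` are the densities of
the restrictions of `ω`, then `D_ω = D₀ D₁ z` for some positive `z` in the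
center of `M₁`, and `D₀, D₁, z` mutually commute. -/
theorem density_factorization {n : ℕ}
    (Dω : Matrix (Fin n) (Fin n) ℂ) (hω : Dω.PosDef) (htr : Dω.trace = 1)
    (M₀ : StarSubalgebra ℂ (Matrix (Fin n) (Fin n) ℂ))
    (hinv : ∀ (t : ℝ), ∀ a ∈ M₀, hω.1.impow t * a * hω.1.impow (-t) ∈ M₀)
    (D₀ : Matrix (Fin n) (Fin n) ℂ) (hD₀mem : D₀ ∈ M₀) (hD₀ : D₀.PosSemidef)
    (hD₀tr : ∀ a ∈ M₀, (D₀ * a).trace = (Dω * a).trace)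
    (D₁ : Matrix (Fin n) (Fin n) ℂ)
    (hD₁mem : ∀ b ∈ M₀, D₁ * b = b * D₁) (hD₁ : D₁.PosSemidef)
    (hD₁tr : ∀ a : Matrix (Fin n) (Fin n) ℂ, (∀ b ∈ M₀, a * b = b * a) →
      (D₁ * a).trace = (Dω * a).trace) :
    ∃ z : Matrix (Fin n) (Fin n) ℂ, z.PosSemidef ∧
      (∀ b ∈ M₀, z * b = b * z) ∧
      (∀ a : Matrix (Fin n) (Fin n) ℂ, (∀ b ∈ M₀, a * b = b * a) → z * a = a * z) ∧
      Dω = D₀ * D₁ * z ∧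
      D₀ * D₁ = D₁ * D₀ ∧ D₀ * z = z * D₀ ∧ D₁ * z = z * D₁ := by
  exact density_factorization_general hω (fun _ => mul_mul_inv_mem_of_forall_impow hω hinv)
    ⟨hD₀mem, hD₀tr⟩ ⟨mem_centralizer_iff_forall_commute.2 hD₁mem,
      fun a ha => hD₁tr a (mem_centralizer_iff_forall_commute.1 ha)⟩
end

section
/- Let M = M_n(ℂ), ω a faithful state with density D_ω, and M₀ a *-subalgebra invariant under the modular group of ω, with factorization D_ω = D₀ D₁ z as above. For a state φ with density D_φ dominated by ω, the following are equivalent: (a) D_φ^{it} D_ω^{-it} ∈ M₀ for all real t; (b) D_φ = D_{φ,0} D₁ z, where D_{φ,0} ∈ M₀ is the density of φ|M₀ with respect to the restricted trace. -/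
open ComplexOrder Matrix

/-!
Put `K = D₁ z`, which commutes with `M₀`, so that `D_ω = D₀ K`.

If the cocycle lies in `M₀`, then so does its entire continuation `w ↦ D_φ ^ w D_ω ^ (-w)`, by the
identity theorem applied modulo `M₀`. At `w = 1` this gives `a = D_φ D_ω⁻¹ ∈ M₀`. As `D₀` is the
restricted density of `D_ω`, `a D₀` is the restricted density of `a D_ω = D_φ`, that is
`D_{φ,0} = a D₀`, and hence `D_φ = a D₀ K = D_{φ,0} K`.

Conversely, all the factors are Hermitian and `K` commutes with `D₀` and `D_{φ,0}`, so the powers of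
`D_{φ,0} K` and `D₀ K` split and those of `K` cancel: the cocycle is `D_{φ,0} ^ (it) D₀ ^ (-it)`.
-/

section IdentityPrinciple

open Filter Topology

lemma mem_of_frequently_mem_of_analyticOnNhd {𝕜 E : Type*} [NontriviallyNormedField 𝕜]
    [ConnectedSpace 𝕜] [NormedAddCommGroup E] [NormedSpace 𝕜 E] (S : Submodule 𝕜 E)
    [IsClosed (S : Set E)] {F : 𝕜 → E} (hF : AnalyticOnNhd 𝕜 F Set.univ) {z₀ : 𝕜}
    (h : ∃ᶠ z in 𝓝[≠] z₀, F z ∈ S) (z : 𝕜) : F z ∈ S := by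
  have mkQ_comp_eq_zero : S.mkQL ∘ F = 0 :=
    (S.mkQL.comp_analyticOnNhd hF).eq_of_frequently_eq analyticOnNhd_const
      (h.mono fun z hz => (Submodule.Quotient.mk_eq_zero S).mpr hz)
  exact (Submodule.Quotient.mk_eq_zero S).mp (congrFun mkQ_comp_eq_zero z)

lemma frequently_nhdsNE_zero_of_forall_I_mul {p : ℂ → Prop} (h : ∀ t : ℝ, p (Complex.I * t)) :
    ∃ᶠ w in 𝓝[≠] 0, p w := by
  have tendsto_I_mul : Tendsto (fun t : ℝ => Complex.I * t) (𝓝[≠] 0) (𝓝[≠] 0) := by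
    have continuous_I_mul : Continuous fun t : ℝ => Complex.I * t := by fun_prop
    simpa using continuous_I_mul.continuousWithinAt.tendsto_nhdsWithin (x := 0)
      (s := {0}ᶜ) (t := {0}ᶜ) fun t ht => by simpa using ht
  exact tendsto_I_mul.frequently (Eventually.of_forall h).frequently

end IdentityPrinciple

lemma isSelfAdjoint_right_of_isSelfAdjoint_mul {R : Type*} [Monoid R] [StarMul R] {x k : R}
    (hx : IsSelfAdjoint x) (hxu : IsUnit x) (hxk : Commute x k) (h : IsSelfAdjoint (x * k)) :
    IsSelfAdjoint k := by
  refine hxu.mul_right_cancel ?_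
  rw [← hxk.eq, ← h.star_eq, star_mul, hx.star_eq]

section HermitianCalculus

variable {𝕜 n : Type*} [RCLike 𝕜] [Fintype n] [DecidableEq n] {A B D : Matrix n n 𝕜}

/-- The functional calculus `f ↦ f(D)` of a Hermitian matrix `D`. The function `f` is defined on all
of `𝕜`, so that polynomials and multiplicative functions can be used without restricting to the
spectrum. -/
noncomputable def hermitianCalculus (hD : D.IsHermitian) : (𝕜 → 𝕜) →ₐ[𝕜] Matrix n n 𝕜 :=
  ((Unitary.conjStarAlgAut 𝕜 _ hD.eigenvectorUnitary).toAlgEquiv.toAlgHom.comp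
    (diagonalAlgHom 𝕜)).comp
    (AlgHom.pi fun i => Pi.evalAlgHom 𝕜 (fun _ : 𝕜 => 𝕜) (hD.eigenvalues i : 𝕜))

lemma hermitianCalculus_apply (hD : D.IsHermitian) (f : 𝕜 → 𝕜) :
    hermitianCalculus hD f =
      hD.eigenvectorUnitary * diagonal (fun i => f (hD.eigenvalues i)) *
        star (hD.eigenvectorUnitary : Matrix n n 𝕜) :=
  rfl

lemma hermitianCalculus_congr (hD : D.IsHermitian) {f g : 𝕜 → 𝕜}
    (h : ∀ i, f (hD.eigenvalues i) = g (hD.eigenvalues i)) :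
    hermitianCalculus hD f = hermitianCalculus hD g := by
  simp only [hermitianCalculus_apply, h]

lemma hermitianCalculus_id (hD : D.IsHermitian) : hermitianCalculus hD id = D :=
  hD.spectral_theorem.symm

lemma exists_polynomial_hermitianCalculus_eq_aeval (hD : D.IsHermitian) (f : 𝕜 → 𝕜) (a : 𝕜) :
    ∃ p : Polynomial 𝕜, p.eval a = f a ∧ hermitianCalculus hD f = Polynomial.aeval D p := by
  let nodes : Finset 𝕜 := insert a (Finset.univ.image fun i => (hD.eigenvalues i : 𝕜))
  have eval_eq : ∀ x ∈ nodes, (Lagrange.interpolate nodes id f).eval x = f x := fun x hx =>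
    Lagrange.eval_interpolate_at_node (v := id) f Function.injective_id.injOn hx
  refine ⟨Lagrange.interpolate nodes id f, eval_eq a (Finset.mem_insert_self _ _), ?_⟩
  nth_rw 2 [← hermitianCalculus_id hD]
  rw [Polynomial.aeval_algHom_apply]
  refine hermitianCalculus_congr hD fun i => ?_
  rw [Polynomial.aeval_fn_apply, id, Polynomial.coe_aeval_eq_eval, eval_eq _ (by simp [nodes])]

lemma hermitianCalculus_mem (hD : D.IsHermitian) {M : Subalgebra 𝕜 (Matrix n n 𝕜)} (hM : D ∈ M)
    (f : 𝕜 → 𝕜) : hermitianCalculus hD f ∈ M := by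
  obtain ⟨p, -, hp⟩ := exists_polynomial_hermitianCalculus_eq_aeval hD f 0
  rw [hp]
  exact Algebra.adjoin_singleton_le hM (Polynomial.aeval_mem_adjoin_singleton 𝕜 D)

lemma aeval_mulVec_of_mulVec_eq_smul {R : Type*} [CommRing R] {A : Matrix n n R} {a : R}
    {v : n → R} (hv : A *ᵥ v = a • v) (p : Polynomial R) :
    Polynomial.aeval A p *ᵥ v = p.eval a • v := by
  induction p using Polynomial.induction_on' with
  | add p q hp hq => simp [add_mulVec, add_smul, hp, hq]
  | monomial k c =>
    have pow_mulVec : A ^ k *ᵥ v = a ^ k • v := by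
      induction k with
      | zero => simp
      | succ k ih => rw [pow_succ, ← mulVec_mulVec, hv, mulVec_smul, ih, smul_smul, pow_succ']
    simp [Polynomial.aeval_monomial, ← Algebra.smul_def, smul_mulVec, pow_mulVec, smul_smul]

lemma hermitianCalculus_mulVec (hD : D.IsHermitian) (f : 𝕜 → 𝕜) {a : 𝕜} {v : n → 𝕜}
    (hv : D *ᵥ v = a • v) : hermitianCalculus hD f *ᵥ v = f a • v := by
  obtain ⟨p, hpa, hp⟩ := exists_polynomial_hermitianCalculus_eq_aeval hD f a
  rw [hp, aeval_mulVec_of_mulVec_eq_smul hv, hpa]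

lemma eq_of_mulVec_eq_on_joint_eigenvectors (hA : A.IsHermitian) (hB : B.IsHermitian)
    (hAB : Commute A B) {X Y : Matrix n n 𝕜}
    (h : ∀ (a b : 𝕜) (v : n → 𝕜), A *ᵥ v = a • v → B *ᵥ v = b • v → X *ᵥ v = Y *ᵥ v) :
    X = Y := by
  have iSup_eigenspaces_eq_top :=
    LinearMap.IsSymmetric.iSup_iSup_eigenspace_inf_eigenspace_eq_top_of_commute
      (isSymmetric_toEuclideanLin_iff.mpr hA) (isSymmetric_toEuclideanLin_iff.mpr hB) <| by
        ext v i
        simp [mulVec_mulVec, hAB.eq]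
  suffices ⊤ ≤ LinearMap.eqLocus X.toEuclideanLin Y.toEuclideanLin from
    toEuclideanLin.injective (LinearMap.ext fun v => this (Submodule.mem_top (x := v)))
  rw [← iSup_eigenspaces_eq_top]
  refine iSup₂_le fun a b v ⟨hva, hvb⟩ => WithLp.ofLp_injective _ ?_
  rw [SetLike.mem_coe, Module.End.mem_eigenspace_iff] at hva hvb
  exact h a b v.ofLp (congrArg WithLp.ofLp hva) (congrArg WithLp.ofLp hvb)

lemma hermitianCalculus_of_eq_mul (hA : A.IsHermitian) (hB : B.IsHermitian) (hD : D.IsHermitian)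
    (hAB : Commute A B) (h : D = A * B) (f : 𝕜 →ₙ* 𝕜) :
    hermitianCalculus hD f = hermitianCalculus hA f * hermitianCalculus hB f := by
  refine eq_of_mulVec_eq_on_joint_eigenvectors hA hB hAB fun a b v hva hvb => ?_
  have hv : D *ᵥ v = (a * b) • v := by
    rw [h, ← mulVec_mulVec, hvb, mulVec_smul, hva, smul_smul, mul_comm b]
  rw [hermitianCalculus_mulVec hD f hv, ← mulVec_mulVec, hermitianCalculus_mulVec hB f hvb,
    mulVec_smul, hermitianCalculus_mulVec hA f hva, smul_smul, map_mul, mul_comm (f a)]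

lemma eigenvalues_ne_zero_of_isUnit (hD : D.IsHermitian) (h : IsUnit D) (i : n) :
    hD.eigenvalues i ≠ 0 := by
  have det_ne_zero : D.det ≠ 0 := ((isUnit_iff_isUnit_det D).mp h).ne_zero
  rw [hD.det_eq_prod_eigenvalues, Finset.prod_ne_zero_iff] at det_ne_zero
  exact_mod_cast det_ne_zero i (Finset.mem_univ i)

open scoped Matrix.Norms.L2Operator in
lemma differentiable_hermitianCalculus {E : Type*} [NormedAddCommGroup E] [NormedSpace 𝕜 E]
    (hD : D.IsHermitian) {f : E → 𝕜 → 𝕜} (hf : ∀ x, Differentiable 𝕜 fun w => f w x) :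
    Differentiable 𝕜 fun w => hermitianCalculus hD (f w) := by
  let conjDiagonal : (n → 𝕜) →ₗ[𝕜] Matrix n n 𝕜 :=
    (Unitary.conjStarAlgAut 𝕜 _ hD.eigenvectorUnitary).toAlgEquiv.toLinearMap ∘ₗ
      diagonalLinearMap n 𝕜 𝕜
  exact conjDiagonal.toContinuousLinearMap.differentiable.comp
    (differentiable_pi.mpr fun i => hf (hD.eigenvalues i))

end HermitianCalculus

section AbsPow

/-- The function `x ↦ |x|^w`, with value `0` at `0` for every exponent `w`. It differs from the
complex power at `x = 0`, `w = 0`, which makes it entire in `w` and multiplicative in `x`. -/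
noncomputable def absPow (w : ℂ) : ℂ →ₙ* ℂ where
  toFun x := if x = 0 then 0 else Complex.exp (w * Real.log ‖x‖)
  map_mul' x y := by
    by_cases hx : x = 0
    · simp [hx]
    by_cases hy : y = 0
    · simp [hy]
    simp [hx, hy, ← Complex.exp_add, Real.log_mul, mul_add]

lemma absPow_apply (w x : ℂ) :
    absPow w x = if x = 0 then 0 else Complex.exp (w * Real.log ‖x‖) :=
  rfl

lemma absPow_one_ofReal {x : ℝ} (hx : 0 ≤ x) : absPow 1 x = x := by
  obtain rfl | hx := hx.eq_or_lt
  · simp [absPow_apply]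
  · simp [absPow_apply, hx.ne', abs_of_pos hx, ← Complex.ofReal_exp, Real.exp_log hx]

lemma absPow_mul_absPow_neg (w : ℂ) {x : ℂ} (hx : x ≠ 0) : absPow w x * absPow (-w) x = 1 := by
  simp [absPow_apply, hx, ← Complex.exp_add]

lemma differentiable_absPow (x : ℂ) : Differentiable ℂ fun w => absPow w x := by
  simp only [absPow_apply]
  split_ifs <;> fun_prop

variable {n : Type*} [Fintype n] [DecidableEq n] {A B D : Matrix n n ℂ}

lemma hermitianCalculus_absPow_one (hD : D.PosSemidef) :
    hermitianCalculus hD.isHermitian (absPow 1) = D := by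
  conv_rhs => rw [← hermitianCalculus_id hD.isHermitian]
  exact hermitianCalculus_congr _ fun i => absPow_one_ofReal (hD.eigenvalues_nonneg i)

lemma hermitianCalculus_absPow_mul_absPow_neg (hD : D.IsHermitian) (h : IsUnit D) (w : ℂ) :
    hermitianCalculus hD (absPow w) * hermitianCalculus hD (absPow (-w)) = 1 := by
  rw [← map_mul, ← map_one (hermitianCalculus hD)]
  exact hermitianCalculus_congr hD fun i =>
    absPow_mul_absPow_neg w (Complex.ofReal_ne_zero.mpr (eigenvalues_ne_zero_of_isUnit hD h i))

lemma hermitianCalculus_absPow_neg_one (hD : D.PosDef) :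
    hermitianCalculus hD.isHermitian (absPow (-1)) = D⁻¹ := by
  refine (inv_eq_right_inv ?_).symm
  nth_rw 1 [← hermitianCalculus_absPow_one hD.posSemidef]
  exact hermitianCalculus_absPow_mul_absPow_neg hD.isHermitian hD.isUnit 1

lemma impow_eq_hermitianCalculus {n : ℕ} {D : Matrix (Fin n) (Fin n) ℂ} (hD : D.IsHermitian)
    (t : ℝ) : hD.impow t = hermitianCalculus hD (absPow (Complex.I * t)) := by
  simp [Matrix.IsHermitian.impow, hermitianCalculus_apply, absPow_apply]

end AbsPow

section RestrictedDensity

variable {𝕜 n : Type*} [RCLike 𝕜] [Fintype n] [DecidableEq n]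
  {M : StarSubalgebra 𝕜 (Matrix n n 𝕜)} {ρ ρ₀ ρ₀' : Matrix n n 𝕜}

/-- `ρ₀` is the density on the subalgebra `M`, with respect to the restricted trace, of the
restriction to `M` of the functional `a ↦ Tr(ρ a)`. -/
structure IsRestrictedDensity (M : StarSubalgebra 𝕜 (Matrix n n 𝕜)) (ρ₀ ρ : Matrix n n 𝕜) :
    Prop where
  mem : ρ₀ ∈ M
  trace_mul_eq : ∀ a ∈ M, (ρ₀ * a).trace = (ρ * a).trace

namespace IsRestrictedDensity

lemma unique (h : IsRestrictedDensity M ρ₀ ρ) (h' : IsRestrictedDensity M ρ₀' ρ) : ρ₀ = ρ₀' := by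
  have trace_sub_mul_star : ((ρ₀ - ρ₀') * star (ρ₀ - ρ₀')).trace = 0 := by
    have star_mem : star (ρ₀ - ρ₀') ∈ M := star_mem (sub_mem h.mem h'.mem)
    rw [sub_mul, trace_sub, h.trace_mul_eq _ star_mem, h'.trace_mul_eq _ star_mem, sub_self]
  exact sub_eq_zero.mp (trace_mul_conjTranspose_self_eq_zero_iff.mp trace_sub_mul_star)

lemma mul_left (h : IsRestrictedDensity M ρ₀ ρ) {a : Matrix n n 𝕜} (ha : a ∈ M) :
    IsRestrictedDensity M (a * ρ₀) (a * ρ) where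
  mem := mul_mem ha h.mem
  trace_mul_eq b hb := by
    rw [trace_mul_cycle, trace_mul_comm, h.trace_mul_eq _ (mul_mem hb ha), trace_mul_comm,
      ← trace_mul_cycle]

lemma conjTranspose (h : IsRestrictedDensity M ρ₀ ρ) : IsRestrictedDensity M ρ₀ᴴ ρᴴ where
  mem := star_mem h.mem
  trace_mul_eq a ha := by
    have trace_star := congrArg star (h.trace_mul_eq (star a) (star_mem ha))
    simpa [← trace_conjTranspose, star_eq_conjTranspose, trace_mul_comm a] using trace_star

lemma isHermitian (h : IsRestrictedDensity M ρ₀ ρ) (hρ : ρ.IsHermitian) : ρ₀.IsHermitian :=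
  unique (hρ.eq ▸ h.conjTranspose) h

end IsRestrictedDensity

end RestrictedDensity

section Cocycle

variable {n : Type*} [Fintype n] [DecidableEq n] {A B X Y K : Matrix n n ℂ}

open scoped Matrix.Norms.L2Operator in
lemma absPow_cocycle_mem_of_forall_I_mul (hA : A.IsHermitian) (hB : B.IsHermitian)
    (S : Submodule ℂ (Matrix n n ℂ))
    (h : ∀ t : ℝ, hermitianCalculus hA (absPow (Complex.I * t)) *
      hermitianCalculus hB (absPow (-(Complex.I * t))) ∈ S) (w : ℂ) :
    hermitianCalculus hA (absPow w) * hermitianCalculus hB (absPow (-w)) ∈ S := by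
  have differentiable_cocycle : Differentiable ℂ fun w =>
      hermitianCalculus hA (absPow w) * hermitianCalculus hB (absPow (-w)) :=
    (differentiable_hermitianCalculus hA differentiable_absPow).mul
      (differentiable_hermitianCalculus hB fun x =>
        (differentiable_absPow x).comp differentiable_neg)
  have : IsClosed (S : Set (Matrix n n ℂ)) := S.closed_of_finiteDimensional
  exact mem_of_frequently_mem_of_analyticOnNhd S
    (fun z _ => differentiable_cocycle.analyticAt z)
    (frequently_nhdsNE_zero_of_forall_I_mul h) w

lemma mul_inv_mem_of_forall_absPow_cocycle_mem (hA : A.PosSemidef) (hB : B.PosDef)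
    (S : Submodule ℂ (Matrix n n ℂ))
    (h : ∀ t : ℝ, hermitianCalculus hA.isHermitian (absPow (Complex.I * t)) *
      hermitianCalculus hB.isHermitian (absPow (-(Complex.I * t))) ∈ S) : A * B⁻¹ ∈ S := by
  simpa only [hermitianCalculus_absPow_one hA, hermitianCalculus_absPow_neg_one hB] using
    absPow_cocycle_mem_of_forall_I_mul hA.isHermitian hB.isHermitian S h 1

lemma absPow_cocycle_of_eq_mul_right (hA : A.IsHermitian) (hB : B.IsHermitian)
    (hX : X.IsHermitian) (hY : Y.IsHermitian) (hK : K.IsHermitian) (hKu : IsUnit K)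
    (hXK : Commute X K) (hYK : Commute Y K) (hAe : A = X * K) (hBe : B = Y * K) (w : ℂ) :
    hermitianCalculus hA (absPow w) * hermitianCalculus hB (absPow (-w)) =
      hermitianCalculus hX (absPow w) * hermitianCalculus hY (absPow (-w)) := by
  rw [hermitianCalculus_of_eq_mul hX hK hA hXK hAe,
    hermitianCalculus_of_eq_mul hK hY hB hYK.symm (hBe.trans hYK.eq), mul_assoc,
    ← mul_assoc (hermitianCalculus hK _), hermitianCalculus_absPow_mul_absPow_neg hK hKu, one_mul]

end Cocycle

theorem factorization_criterion_general {n : ℕ}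
    {Dω : Matrix (Fin n) (Fin n) ℂ} (hω : Dω.PosDef)
    {M₀ : StarSubalgebra ℂ (Matrix (Fin n) (Fin n) ℂ)}
    {D₀ : Matrix (Fin n) (Fin n) ℂ} (hD₀ : IsRestrictedDensity M₀ D₀ Dω)
    {K : Matrix (Fin n) (Fin n) ℂ} (hK : ∀ b ∈ M₀, Commute K b) (hfact : Dω = D₀ * K)
    {Dφ : Matrix (Fin n) (Fin n) ℂ} (hφ : Dφ.PosSemidef)
    {Dφ₀ : Matrix (Fin n) (Fin n) ℂ} (hDφ₀ : IsRestrictedDensity M₀ Dφ₀ Dφ) :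
    (∀ t : ℝ, hφ.1.impow t * hω.1.impow (-t) ∈ M₀) ↔ Dφ = Dφ₀ * K := by
  simp only [impow_eq_hermitianCalculus, Complex.ofReal_neg, mul_neg]
  constructor
  · intro cocycle_mem
    have quotient_mem : Dφ * Dω⁻¹ ∈ M₀ := mul_inv_mem_of_forall_absPow_cocycle_mem hφ hω
      (Subalgebra.toSubmodule M₀.toSubalgebra) cocycle_mem
    have quotient_mul : Dφ * Dω⁻¹ * Dω = Dφ :=
      nonsing_inv_mul_cancel_right _ _ ((isUnit_iff_isUnit_det _).mp hω.isUnit)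
    have hDφ₀_eq : Dφ₀ = Dφ * Dω⁻¹ * D₀ :=
      hDφ₀.unique (by simpa only [quotient_mul] using hD₀.mul_left quotient_mem)
    rw [hDφ₀_eq, mul_assoc, ← hfact, quotient_mul]
  · intro hφfact t
    have ⟨D₀_isUnit, K_isUnit⟩ : IsUnit D₀ ∧ IsUnit K := by
      simpa only [isUnit_iff_isUnit_det, hfact, det_mul, IsUnit.mul_iff] using hω.isUnit
    have D₀_isHermitian : D₀.IsHermitian := hD₀.isHermitian hω.1
    have Dφ₀_isHermitian : Dφ₀.IsHermitian := hDφ₀.isHermitian hφ.1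
    have D₀_commute : Commute D₀ K := (hK D₀ hD₀.mem).symm
    have K_isHermitian : K.IsHermitian := isSelfAdjoint_right_of_isSelfAdjoint_mul
      D₀_isHermitian D₀_isUnit D₀_commute (hfact ▸ hω.1)
    rw [absPow_cocycle_of_eq_mul_right hφ.1 hω.1 Dφ₀_isHermitian D₀_isHermitian K_isHermitian
      K_isUnit (hK Dφ₀ hDφ₀.mem).symm D₀_commute hφfact hfact]
    exact mul_mem (hermitianCalculus_mem (M := M₀.toSubalgebra) Dφ₀_isHermitian hDφ₀.mem _)
      (hermitianCalculus_mem (M := M₀.toSubalgebra) D₀_isHermitian hD₀.mem _)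

/-- **Quantum factorization criterion.**  Let `ω` be a faithful state on
`M_n(ℂ)` with `M₀` invariant under its modular group and factorization
`D_ω = D₀ D₁ z` as in the factorization theorem.  A state `φ` satisfies the
cocycle condition `D_φ^{it} D_ω^{-it} ∈ M₀` for all `t` (sufficiency of `M₀`)
iff `D_φ = D_{φ,0} D₁ z` with `D_{φ,0} ∈ M₀` the density of `φ|M₀`. -/
theorem factorization_criterion {n : ℕ}
    (Dω : Matrix (Fin n) (Fin n) ℂ) (hω : Dω.PosDef) (htr : Dω.trace = 1)
    (M₀ : StarSubalgebra ℂ (Matrix (Fin n) (Fin n) ℂ))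
    (hinv : ∀ (t : ℝ), ∀ a ∈ M₀, hω.1.impow t * a * hω.1.impow (-t) ∈ M₀)
    (D₀ : Matrix (Fin n) (Fin n) ℂ) (hD₀mem : D₀ ∈ M₀) (hD₀ : D₀.PosSemidef)
    (hD₀tr : ∀ a ∈ M₀, (D₀ * a).trace = (Dω * a).trace)
    (D₁ : Matrix (Fin n) (Fin n) ℂ)
    (hD₁mem : ∀ b ∈ M₀, D₁ * b = b * D₁) (hD₁ : D₁.PosSemidef)
    (hD₁tr : ∀ a : Matrix (Fin n) (Fin n) ℂ, (∀ b ∈ M₀, a * b = b * a) →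
      (D₁ * a).trace = (Dω * a).trace)
    (z : Matrix (Fin n) (Fin n) ℂ) (hz : z.PosSemidef)
    (hzM₀ : ∀ b ∈ M₀, z * b = b * z)
    (hzc : ∀ a : Matrix (Fin n) (Fin n) ℂ, (∀ b ∈ M₀, a * b = b * a) → z * a = a * z)
    (hfact : Dω = D₀ * D₁ * z)
    (Dφ : Matrix (Fin n) (Fin n) ℂ) (hφ : Dφ.PosSemidef) (hφtr : Dφ.trace = 1)
    (Dφ₀ : Matrix (Fin n) (Fin n) ℂ) (hDφ₀mem : Dφ₀ ∈ M₀)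
    (hDφ₀tr : ∀ a ∈ M₀, (Dφ₀ * a).trace = (Dφ * a).trace) :
    (∀ t : ℝ, hφ.1.impow t * hω.1.impow (-t) ∈ M₀) ↔ Dφ = Dφ₀ * D₁ * z := by
  rw [mul_assoc] at hfact ⊢
  exact factorization_criterion_general hω ⟨hD₀mem, hD₀tr⟩
    (fun b hb => Commute.mul_left (hD₁mem b hb) (hzM₀ b hb)) hfact hφ ⟨hDφ₀mem, hDφ₀tr⟩
end

section
/- Let H_A, H_B, H_C be finite-dimensional Hilbert spaces and suppose H_B = ⊕_n (H_{nB}^L ⊗ H_{nB}^R) and the density matrix of a state ω_{ABC} on H_A ⊗ H_B ⊗ H_C has the form ω_{ABC} = Σ_n q_n D_n^L ⊗ D_n^R with q_n ≥ 0, Σ q_n = 1, where D_n^L is a density matrix on H_A ⊗ H_{nB}^L and D_n^R a density matrix on H_{nB}^R ⊗ H_C. Then the strong subadditivity of von Neumann entropy holds with equality: S(ω_{ABC}) + S(ω_B) = S(ω_{AB}) + S(ω_{BC}). -/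
open ComplexOrder Matrix

/-- von Neumann entropy of a Hermitian matrix: `S(ρ) = -Tr ρ log ρ`, computed
through the eigenvalues. -/
noncomputable def vnEntropy {α : Type*} [Fintype α] [DecidableEq α]
    {ρ : Matrix α α ℂ} (h : ρ.IsHermitian) : ℝ :=
  ∑ i, Real.negMulLog (h.eigenvalues i)

/-- Partial trace over the outer factors `A` and `C`. -/
noncomputable def ptB {ιA B ιC : Type*} [Fintype ιA] [Fintype ιC]
    (ρ : Matrix (ιA × B × ιC) (ιA × B × ιC) ℂ) : Matrix B B ℂ :=
  Matrix.of fun b b' => ∑ a, ∑ c, ρ (a, b, c) (a, b', c)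

/-- Partial trace over `C`. -/
noncomputable def ptAB {ιA B ιC : Type*} [Fintype ιC]
    (ρ : Matrix (ιA × B × ιC) (ιA × B × ιC) ℂ) : Matrix (ιA × B) (ιA × B) ℂ :=
  Matrix.of fun p q => ∑ c, ρ (p.1, p.2, c) (q.1, q.2, c)

/-- Partial trace over `A`. -/
noncomputable def ptBC {ιA B ιC : Type*} [Fintype ιA]
    (ρ : Matrix (ιA × B × ιC) (ιA × B × ιC) ℂ) : Matrix (B × ιC) (B × ιC) ℂ :=
  Matrix.of fun p q => ∑ a, ρ (a, p.1, p.2) (a, q.1, q.2)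

/-- The state `ω_{ABC} = Σ_n q_n D_n^L ⊗ D_n^R` adapted to the decomposition
`H_B = ⊕_n (H_{nB}^L ⊗ H_{nB}^R)`. -/
noncomputable def ssaState {N : ℕ} (l r : Fin N → ℕ) (ιA ιC : Type*)
    (q : Fin N → ℝ)
    (DL : (n : Fin N) → Matrix (ιA × Fin (l n)) (ιA × Fin (l n)) ℂ)
    (DR : (n : Fin N) → Matrix (Fin (r n) × ιC) (Fin (r n) × ιC) ℂ) :
    Matrix (ιA × ((n : Fin N) × (Fin (l n) × Fin (r n))) × ιC)
           (ιA × ((n : Fin N) × (Fin (l n) × Fin (r n))) × ιC) ℂ :=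
  Matrix.of fun x y =>
    if h : x.2.1.1 = y.2.1.1 then
      (q x.2.1.1 : ℂ) *
        DL x.2.1.1 (x.1, x.2.1.2.1) (y.1, Fin.cast (by rw [h]) y.2.1.2.1) *
        DR x.2.1.1 (x.2.1.2.2, x.2.2) (Fin.cast (by rw [h]) y.2.1.2.2, y.2.2)
    else 0

/-!
Entropy is additive over direct sums, and `S(P ⊗ Q) = Tr Q · S(P) + Tr P · S(Q)` for positive
matrices of any trace. After absorbing `q_n` into `D_n^L`, the state and its three marginals are all
direct sums over `n` of products `P_n ⊗ Q_n`, where `P_n` is `D_n^L` or its partial trace and `Q_n`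
is `D_n^R` or its partial trace. Partial traces preserve traces, so both sides of the identity
receive each of `S(D_n^L)`, `S(Tr_A D_n^L)`, `S(D_n^R)`, `S(Tr_C D_n^R)` with the same coefficient.
-/

open scoped Kronecker

section Spectral

variable {α : Type*} [Fintype α] [DecidableEq α]

theorem eq_eigenvectorUnitary_mul_diagonal_mul_star {A : Matrix α α ℂ} (hA : A.IsHermitian) :
    A = (hA.eigenvectorUnitary : Matrix α α ℂ) *
      diagonal (fun i => (hA.eigenvalues i : ℂ)) * star (hA.eigenvectorUnitary : Matrix α α ℂ) := by
  conv_lhs => rw [hA.spectral_theorem, Unitary.conjStarAlgAut_apply]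
  rfl

theorem sum_eigenvalues_eq_re_trace {A : Matrix α α ℂ} (hA : A.IsHermitian) :
    ∑ i, hA.eigenvalues i = A.trace.re := by
  rw [hA.trace_eq_sum_eigenvalues, Complex.re_sum]
  rfl

theorem isHermitian_kronecker {m n S : Type*} [CommSemiring S] [StarRing S]
    {A : Matrix m m S} {B : Matrix n n S} (hA : A.IsHermitian) (hB : B.IsHermitian) :
    (A ⊗ₖ B).IsHermitian := by
  rw [IsHermitian, conjTranspose_kronecker, hA, hB]

end Spectral

section Entropy

variable {α β : Type*} [Fintype α] [DecidableEq α] [Fintype β] [DecidableEq β]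

theorem vnEntropy_eq_sum_of_charpoly_eq_prod {ι : Type*} [Fintype ι] {A : Matrix α α ℂ}
    (hA : A.IsHermitian) (d : ι → ℝ)
    (hd : A.charpoly = ∏ i, (Polynomial.X - Polynomial.C (d i : ℂ))) :
    vnEntropy hA = ∑ i, Real.negMulLog (d i) := by
  have roots_eq : Multiset.map (fun i => (hA.eigenvalues i : ℂ)) Finset.univ.val =
      Multiset.map (fun i => (d i : ℂ)) Finset.univ.val := by
    rw [← Polynomial.roots_multiset_prod_X_sub_C (Multiset.map (fun i => (d i : ℂ)) _),
      Multiset.map_map]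
    exact hA.roots_charpoly_eq_eigenvalues.symm.trans (congrArg Polynomial.roots hd)
  have sum_eq := congrArg (fun s => (s.map fun z : ℂ => Real.negMulLog z.re).sum) roots_eq
  simp only [Multiset.map_map] at sum_eq
  exact sum_eq

theorem vnEntropy_eq_sum_of_eq_mul_diagonal_mul {A U V : Matrix α α ℂ} (hA : A.IsHermitian)
    (d : α → ℝ) (hVU : V * U = 1) (hd : A = U * diagonal (fun i => (d i : ℂ)) * V) :
    vnEntropy hA = ∑ i, Real.negMulLog (d i) := by
  refine vnEntropy_eq_sum_of_charpoly_eq_prod hA d ?_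
  rw [hd, charpoly_mul_comm, ← Matrix.mul_assoc, hVU, Matrix.one_mul, charpoly_diagonal]

theorem vnEntropy_submatrix_equiv {A : Matrix α α ℂ} (hA : A.IsHermitian) (e : β ≃ α) :
    vnEntropy (hA.submatrix e) = vnEntropy hA := by
  refine vnEntropy_eq_sum_of_charpoly_eq_prod _ hA.eigenvalues ?_
  exact (charpoly_reindex e.symm A).trans hA.charpoly_eq

theorem vnEntropy_kronecker {A : Matrix α α ℂ} {B : Matrix β β ℂ}
    (hA : A.IsHermitian) (hB : B.IsHermitian) :
    vnEntropy (isHermitian_kronecker hA hB) =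
      B.trace.re * vnEntropy hA + A.trace.re * vnEntropy hB := by
  let U : Matrix α α ℂ := hA.eigenvectorUnitary
  let V : Matrix β β ℂ := hB.eigenvectorUnitary
  have unitary : (star U ⊗ₖ star V) * (U ⊗ₖ V) = 1 := by
    rw [← mul_kronecker_mul, Unitary.coe_star_mul_self, Unitary.coe_star_mul_self,
      one_kronecker_one]
  let D : Matrix α α ℂ := diagonal fun i => (hA.eigenvalues i : ℂ)
  let E : Matrix β β ℂ := diagonal fun j => (hB.eigenvalues j : ℂ)
  have diagonalization : A ⊗ₖ B = (U ⊗ₖ V) *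
      diagonal (fun x => ((hA.eigenvalues x.1 * hB.eigenvalues x.2 : ℝ) : ℂ)) *
        (star U ⊗ₖ star V) :=
    calc
      A ⊗ₖ B = (U * D * star U) ⊗ₖ (V * E * star V) :=
        congrArg₂ (· ⊗ₖ ·) (eq_eigenvectorUnitary_mul_diagonal_mul_star hA)
          (eq_eigenvectorUnitary_mul_diagonal_mul_star hB)
      _ = (U ⊗ₖ V) * (D ⊗ₖ E) * (star U ⊗ₖ star V) := by
        rw [mul_kronecker_mul, mul_kronecker_mul]
      _ = _ := by
        simp only [D, E, diagonal_kronecker_diagonal, Complex.ofReal_mul]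
  rw [vnEntropy_eq_sum_of_eq_mul_diagonal_mul _ _ unitary diagonalization,
    ← sum_eigenvalues_eq_re_trace hA, ← sum_eigenvalues_eq_re_trace hB]
  simp only [vnEntropy, Fintype.sum_prod_type, Real.negMulLog_mul, Finset.sum_add_distrib,
    ← Finset.mul_sum, ← Finset.sum_mul]

variable {o : Type*} [Fintype o] [DecidableEq o]

theorem vnEntropy_blockDiagonal' {m : o → Type*} [∀ n, Fintype (m n)] [∀ n, DecidableEq (m n)]
    {M : ∀ n, Matrix (m n) (m n) ℂ} (hM : ∀ n, (M n).IsHermitian) :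
    vnEntropy (isHermitian_blockDiagonal'_iff.2 hM) = ∑ n, vnEntropy (hM n) := by
  let U n : Matrix (m n) (m n) ℂ := (hM n).eigenvectorUnitary
  have unitary : blockDiagonal' (fun n => star (U n)) * blockDiagonal' U = 1 := by
    rw [← blockDiagonal'_mul, ← blockDiagonal'_one]
    exact congrArg blockDiagonal' (funext fun n => Unitary.coe_star_mul_self _)
  have diagonalization : blockDiagonal' M = blockDiagonal' U *
      diagonal (fun x => ((hM x.1).eigenvalues x.2 : ℂ)) * blockDiagonal' fun n => star (U n) := by
    rw [← blockDiagonal'_diagonal fun n i => ((hM n).eigenvalues i : ℂ), ← blockDiagonal'_mul,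
      ← blockDiagonal'_mul]
    exact congrArg blockDiagonal'
      (funext fun n => eq_eigenvectorUnitary_mul_diagonal_mul_star (hM n))
  rw [vnEntropy_eq_sum_of_eq_mul_diagonal_mul _ _ unitary diagonalization, Fintype.sum_sigma]
  rfl

theorem vnEntropy_eq_sum_of_eq_blockDiagonal'_kronecker {m k : o → Type*}
    [∀ n, Fintype (m n)] [∀ n, DecidableEq (m n)] [∀ n, Fintype (k n)] [∀ n, DecidableEq (k n)]
    {P : ∀ n, Matrix (m n) (m n) ℂ} {Q : ∀ n, Matrix (k n) (k n) ℂ}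
    (hP : ∀ n, (P n).IsHermitian) (hQ : ∀ n, (Q n).IsHermitian)
    {ρ : Matrix α α ℂ} (hρ : ρ.IsHermitian) (e : α ≃ Σ n, m n × k n)
    (heq : ρ = (blockDiagonal' fun n => P n ⊗ₖ Q n).submatrix e e) :
    vnEntropy hρ =
      ∑ n, ((Q n).trace.re * vnEntropy (hP n) + (P n).trace.re * vnEntropy (hQ n)) := by
  subst heq
  have hPQ n : (P n ⊗ₖ Q n).IsHermitian := isHermitian_kronecker (hP n) (hQ n)
  rw [vnEntropy_submatrix_equiv (isHermitian_blockDiagonal'_iff.2 hPQ) e,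
    vnEntropy_blockDiagonal' hPQ]
  exact Finset.sum_congr rfl fun n _ => vnEntropy_kronecker (hP n) (hQ n)

end Entropy

section PartialTrace

variable {m k S : Type*} [AddCommMonoid S]

/-- The partial trace over the first tensor factor. -/
def partialTraceFst [Fintype m] (M : Matrix (m × k) (m × k) S) : Matrix k k S :=
  of fun i j => ∑ a, M (a, i) (a, j)

/-- The partial trace over the second tensor factor. -/
def partialTraceSnd [Fintype k] (M : Matrix (m × k) (m × k) S) : Matrix m m S :=
  of fun i j => ∑ c, M (i, c) (j, c)

theorem isHermitian_partialTraceFst [StarAddMonoid S] [Fintype m]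
    {M : Matrix (m × k) (m × k) S} (hM : M.IsHermitian) : (partialTraceFst M).IsHermitian := by
  ext i j
  simp only [partialTraceFst, conjTranspose_apply, of_apply, star_sum, hM.apply]

theorem isHermitian_partialTraceSnd [StarAddMonoid S] [Fintype k]
    {M : Matrix (m × k) (m × k) S} (hM : M.IsHermitian) : (partialTraceSnd M).IsHermitian := by
  ext i j
  simp only [partialTraceSnd, conjTranspose_apply, of_apply, star_sum, hM.apply]

theorem trace_partialTraceFst [Fintype m] [Fintype k] (M : Matrix (m × k) (m × k) S) :
    (partialTraceFst M).trace = M.trace :=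
  (Fintype.sum_prod_type_right fun x => M x x).symm

theorem trace_partialTraceSnd [Fintype m] [Fintype k] (M : Matrix (m × k) (m × k) S) :
    (partialTraceSnd M).trace = M.trace :=
  (Fintype.sum_prod_type fun x => M x x).symm

end PartialTrace

section FactorizedState

variable {o ιA ιC : Type*} {L R : o → Type*}

/-- The distributivity isomorphism `A ⊗ (⨁ₙ Lₙ ⊗ Rₙ) ⊗ C ≅ ⨁ₙ (A ⊗ Lₙ) ⊗ (Rₙ ⊗ C)` on basis
indices. -/
def blockEquivABC : ιA × (Σ n, L n × R n) × ιC ≃ Σ n, (ιA × L n) × (R n × ιC) where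
  toFun x := ⟨x.2.1.1, (x.1, x.2.1.2.1), (x.2.1.2.2, x.2.2)⟩
  invFun y := (y.2.1.1, ⟨y.1, y.2.1.2, y.2.2.1⟩, y.2.2.2)
  left_inv _ := rfl
  right_inv _ := rfl

/-- The distributivity isomorphism `A ⊗ (⨁ₙ Lₙ ⊗ Rₙ) ≅ ⨁ₙ (A ⊗ Lₙ) ⊗ Rₙ` on basis indices. -/
def blockEquivAB : ιA × (Σ n, L n × R n) ≃ Σ n, (ιA × L n) × R n where
  toFun x := ⟨x.2.1, (x.1, x.2.2.1), x.2.2.2⟩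
  invFun y := (y.2.1.1, ⟨y.1, y.2.1.2, y.2.2⟩)
  left_inv _ := rfl
  right_inv _ := rfl

/-- The distributivity isomorphism `(⨁ₙ Lₙ ⊗ Rₙ) ⊗ C ≅ ⨁ₙ Lₙ ⊗ (Rₙ ⊗ C)` on basis indices. -/
def blockEquivBC : (Σ n, L n × R n) × ιC ≃ Σ n, L n × (R n × ιC) where
  toFun x := ⟨x.1.1, x.1.2.1, (x.1.2.2, x.2)⟩
  invFun y := (⟨y.1, y.2.1, y.2.2.1⟩, y.2.2.2)
  left_inv _ := rfl
  right_inv _ := rfl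

variable [DecidableEq o]

/-- The operator `⨁ₙ DLₙ ⊗ DRₙ` on `A ⊗ (⨁ₙ Lₙ ⊗ Rₙ) ⊗ C`, with no normalization imposed: the
weights `qₙ` of a convex combination of states are absorbed into the factors. -/
def factorizedState (DL : ∀ n, Matrix (ιA × L n) (ιA × L n) ℂ)
    (DR : ∀ n, Matrix (R n × ιC) (R n × ιC) ℂ) :
    Matrix (ιA × (Σ n, L n × R n) × ιC) (ιA × (Σ n, L n × R n) × ιC) ℂ :=
  (blockDiagonal' fun n => DL n ⊗ₖ DR n).submatrix blockEquivABC blockEquivABC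

theorem ptAB_factorizedState [Fintype ιC] (DL : ∀ n, Matrix (ιA × L n) (ιA × L n) ℂ)
    (DR : ∀ n, Matrix (R n × ιC) (R n × ιC) ℂ) :
    ptAB (factorizedState DL DR) =
      (blockDiagonal' fun n => DL n ⊗ₖ partialTraceSnd (DR n)).submatrix
        blockEquivAB blockEquivAB := by
  ext ⟨a, n, i, j⟩ ⟨a', n', i', j'⟩
  obtain rfl | hn := eq_or_ne n n'
  · simp [ptAB, factorizedState, blockEquivABC, blockEquivAB, partialTraceSnd,
      blockDiagonal'_apply, Finset.mul_sum]
  · simp [ptAB, factorizedState, blockEquivABC, blockEquivAB, blockDiagonal'_apply, hn]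

theorem ptBC_factorizedState [Fintype ιA] (DL : ∀ n, Matrix (ιA × L n) (ιA × L n) ℂ)
    (DR : ∀ n, Matrix (R n × ιC) (R n × ιC) ℂ) :
    ptBC (factorizedState DL DR) =
      (blockDiagonal' fun n => partialTraceFst (DL n) ⊗ₖ DR n).submatrix
        blockEquivBC blockEquivBC := by
  ext ⟨⟨n, i, j⟩, c⟩ ⟨⟨n', i', j'⟩, c'⟩
  obtain rfl | hn := eq_or_ne n n'
  · simp [ptBC, factorizedState, blockEquivABC, blockEquivBC, partialTraceFst,
      blockDiagonal'_apply, Finset.sum_mul]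
  · simp [ptBC, factorizedState, blockEquivABC, blockEquivBC, blockDiagonal'_apply, hn]

theorem ptB_factorizedState [Fintype ιA] [Fintype ιC]
    (DL : ∀ n, Matrix (ιA × L n) (ιA × L n) ℂ) (DR : ∀ n, Matrix (R n × ιC) (R n × ιC) ℂ) :
    ptB (factorizedState DL DR) =
      blockDiagonal' fun n => partialTraceFst (DL n) ⊗ₖ partialTraceSnd (DR n) := by
  ext ⟨n, i, j⟩ ⟨n', i', j'⟩
  obtain rfl | hn := eq_or_ne n n'
  · simp [ptB, factorizedState, blockEquivABC, partialTraceFst, partialTraceSnd,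
      blockDiagonal'_apply, Finset.sum_mul_sum]
  · simp [ptB, factorizedState, blockEquivABC, blockDiagonal'_apply, hn]

theorem ssaState_eq_factorizedState {N : ℕ} (l r : Fin N → ℕ) (ιA ιC : Type*) (q : Fin N → ℝ)
    (DL : ∀ n, Matrix (ιA × Fin (l n)) (ιA × Fin (l n)) ℂ)
    (DR : ∀ n, Matrix (Fin (r n) × ιC) (Fin (r n) × ιC) ℂ) :
    ssaState l r ιA ιC q DL DR = factorizedState (fun n => (q n : ℂ) • DL n) DR := by
  ext ⟨a, ⟨n, i, j⟩, c⟩ ⟨a', ⟨n', i', j'⟩, c'⟩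
  obtain rfl | hn := eq_or_ne n n'
  · simp [ssaState, factorizedState, blockEquivABC, blockDiagonal'_apply]
  · simp [ssaState, factorizedState, blockEquivABC, blockDiagonal'_apply, hn]

end FactorizedState

theorem ssa_equality_of_factorized_general {o ιA ιC : Type*} {L R : o → Type*}
    [Fintype o] [DecidableEq o] [Fintype ιA] [DecidableEq ιA] [Fintype ιC] [DecidableEq ιC]
    [∀ n, Fintype (L n)] [∀ n, DecidableEq (L n)] [∀ n, Fintype (R n)] [∀ n, DecidableEq (R n)]
    {DL : ∀ n, Matrix (ιA × L n) (ιA × L n) ℂ} {DR : ∀ n, Matrix (R n × ιC) (R n × ιC) ℂ}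
    (hDL : ∀ n, (DL n).PosSemidef) (hDR : ∀ n, (DR n).PosSemidef)
    {ω : Matrix (ιA × (Σ n, L n × R n) × ιC) (ιA × (Σ n, L n × R n) × ιC) ℂ}
    (hω : ω = factorizedState DL DR)
    (hABC : ω.IsHermitian) (hB : (ptB ω).IsHermitian)
    (hAB : (ptAB ω).IsHermitian) (hBC : (ptBC ω).IsHermitian) :
    vnEntropy hABC + vnEntropy hB = vnEntropy hAB + vnEntropy hBC := by
  subst hω
  have hL n := (hDL n).isHermitian
  have hR n := (hDR n).isHermitian
  have hL' n := isHermitian_partialTraceFst (hL n)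
  have hR' n := isHermitian_partialTraceSnd (hR n)
  rw [vnEntropy_eq_sum_of_eq_blockDiagonal'_kronecker hL hR hABC blockEquivABC rfl,
    vnEntropy_eq_sum_of_eq_blockDiagonal'_kronecker hL' hR' hB (Equiv.refl _)
      (ptB_factorizedState DL DR),
    vnEntropy_eq_sum_of_eq_blockDiagonal'_kronecker hL hR' hAB blockEquivAB
      (ptAB_factorizedState DL DR),
    vnEntropy_eq_sum_of_eq_blockDiagonal'_kronecker hL' hR hBC blockEquivBC
      (ptBC_factorizedState DL DR)]
  simp only [trace_partialTraceFst, trace_partialTraceSnd, Finset.sum_add_distrib]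
  ring

/-- **Equality in strong subadditivity for states of the factorized form.**
If `ω_{ABC} = Σ_n q_n D_n^L ⊗ D_n^R` with respect to a decomposition
`H_B = ⊕_n (H_{nB}^L ⊗ H_{nB}^R)`, then
`S(ω_{ABC}) + S(ω_B) = S(ω_{AB}) + S(ω_{BC})`. -/
theorem ssa_equality_of_factorized {N : ℕ} (l r : Fin N → ℕ)
    (ιA ιC : Type*) [Fintype ιA] [DecidableEq ιA] [Fintype ιC] [DecidableEq ιC]
    (q : Fin N → ℝ) (hq : ∀ n, 0 ≤ q n) (hqsum : ∑ n, q n = 1)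
    (DL : (n : Fin N) → Matrix (ιA × Fin (l n)) (ιA × Fin (l n)) ℂ)
    (DR : (n : Fin N) → Matrix (Fin (r n) × ιC) (Fin (r n) × ιC) ℂ)
    (hDL : ∀ n, (DL n).PosSemidef) (hDLtr : ∀ n, (DL n).trace = 1)
    (hDR : ∀ n, (DR n).PosSemidef) (hDRtr : ∀ n, (DR n).trace = 1)
    (hABC : (ssaState l r ιA ιC q DL DR).IsHermitian)
    (hB : (ptB (ssaState l r ιA ιC q DL DR)).IsHermitian)
    (hAB : (ptAB (ssaState l r ιA ιC q DL DR)).IsHermitian)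
    (hBC : (ptBC (ssaState l r ιA ιC q DL DR)).IsHermitian) :
    vnEntropy hABC + vnEntropy hB = vnEntropy hAB + vnEntropy hBC :=
  ssa_equality_of_factorized_general
    (fun n => (hDL n).smul (Complex.zero_le_real.2 (hq n))) hDR
    (ssaState_eq_factorizedState l r ιA ιC q DL DR) hABC hB hAB hBC
end
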